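/- arXiv:1203.1480 — 5 statements merged into one kernel-verified Lean document; each statement's English description precedes it below -/
import Mathlib

section
/- Let σ > 0 and let m = ⌊σ⌋ + 1 be the smallest integer strictly greater than σ. There exists a constant C > 0 (depending only on σ) such that for all t, u ∈ (0,∞), the σ-th fractional derivative in t of the function t ↦ t·e^{-t²/(4u)} satisfies |∂_t^σ[t e^{-t²/(4u)}]| ≤ C e^{-t²/(8u)} u^{(1-σ)/2}. -/
/-!
With `c = u^{-1/2}`, the function `t e^{-t²/(4u)}` is `c⁻¹ G(c t)` for `G x = x e^{-x²/4}`, so its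
`m`-th derivative is `c^{m-1} P(c t) e^{-(c t)²/4}` with a polynomial `P` that depends only on `m`
(`iteratedDeriv_linear_mul_gaussian`). Half of the Gaussian absorbs `P` (`poly_le_exp_sq`), leaving
the bound `A c^{m-1} e^{-t²/(8u)}`. Since `(t+s)² ≥ t² + s²` for `t, s ≥ 0`, the factor `e^{-t²/(8u)}`
leaves the fractional integral, and the remaining `∫ s^{m-σ-1} e^{-s²/(8u)} ds` is a Gamma integral,
equal to a constant times `u^{(m-σ)/2}`. The powers of `u` add up to `(1-σ)/2`.
-/

open Real MeasureTheory

/-- `m σ = ⌊σ⌋ + 1`, the smallest integer strictly greater than `σ > 0`. -/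
noncomputable def mIdx (σ : ℝ) : ℕ := ⌊σ⌋₊ + 1

/-- The σ-th fractional derivative in `t` of a function `F : (0,∞) → ℂ`:
`∂_t^σ F(t) = (e^{-iπ(m-σ)}/Γ(m-σ)) ∫_0^∞ F^{(m)}(t+s) s^{m-σ-1} ds`. -/
noncomputable def fracDeriv (σ : ℝ) (F : ℝ → ℂ) (t : ℝ) : ℂ :=
  Complex.exp (-(Complex.I * (Real.pi : ℂ) * (((mIdx σ : ℝ) - σ : ℝ) : ℂ))) /
      Complex.Gamma (((mIdx σ : ℝ) - σ : ℝ) : ℂ) *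
    ∫ s in Set.Ioi (0 : ℝ), iteratedDeriv (mIdx σ) F (t + s) * ((s ^ ((mIdx σ : ℝ) - σ - 1) : ℝ) : ℂ)

lemma poly_le_exp_sq (P : Polynomial ℝ) :
    ∃ A : ℝ, 0 ≤ A ∧ ∀ x : ℝ, |P.eval x| ≤ A * Real.exp (x ^ 2 / 8) := by
  induction P using Polynomial.induction_on' with
  | add p q hp hq =>
    obtain ⟨A, hA, h1⟩ := hp
    obtain ⟨B, hB, h2⟩ := hq
    refine ⟨A + B, by positivity, fun x => ?_⟩
    rw [Polynomial.eval_add, add_mul]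
    exact (abs_add_le _ _).trans (add_le_add (h1 x) (h2 x))
  | monomial n a =>
    refine ⟨|a| * (n.factorial * Real.exp 2), by positivity, fun x => ?_⟩
    rw [Polynomial.eval_monomial, abs_mul, abs_pow, mul_assoc]
    refine mul_le_mul_of_nonneg_left ?_ (abs_nonneg a)
    have h1 := Real.pow_div_factorial_le_exp |x| (abs_nonneg x) n
    rw [div_le_iff₀ (by positivity)] at h1
    have h2 : Real.exp |x| ≤ Real.exp 2 * Real.exp (x ^ 2 / 8) := by
      rw [← Real.exp_add]
      apply Real.exp_le_exp.2
      -- This is `(|x| - 4)² ≥ 0`.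
      nlinarith [sq_nonneg (|x| - 4), sq_abs x]
    have h3 : (0 : ℝ) ≤ n.factorial := by positivity
    nlinarith [mul_le_mul_of_nonneg_left h2 h3]

/-- The polynomial `P` depends on `n` only and not on the scaling `c`; this is what makes the final
constant uniform in `u`. -/
lemma iteratedDeriv_linear_mul_gaussian (n : ℕ) : ∃ P : Polynomial ℝ, ∀ c : ℝ, c ≠ 0 →
    iteratedDeriv n (fun t : ℝ => ((t * Real.exp (-((c * t) ^ 2 / 4)) : ℝ) : ℂ)) =
      fun t : ℝ => ((c⁻¹ * c ^ n * P.eval (c * t) * Real.exp (-((c * t) ^ 2 / 4)) : ℝ) : ℂ) := by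
  induction n with
  | zero =>
    refine ⟨Polynomial.X, fun c hc => ?_⟩
    funext t
    simp only [iteratedDeriv_zero, pow_zero, mul_one, Polynomial.eval_X]
    rw [inv_mul_cancel_left₀ hc]
  | succ n ih =>
    obtain ⟨P, hP⟩ := ih
    refine ⟨P.derivative - Polynomial.C (1 / 2) * Polynomial.X * P, fun c hc => ?_⟩
    rw [iteratedDeriv_succ, hP c hc]
    funext t
    have hl : HasDerivAt (fun t : ℝ => c * t) c t := by
      simpa using (hasDerivAt_id t).const_mul c
    have h1 : HasDerivAt (fun t : ℝ => P.eval (c * t)) (P.derivative.eval (c * t) * c) t :=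
      (P.hasDerivAt (c * t)).comp t hl
    have h2 := ((hl.pow 2).div_const 4).neg.exp
    have h3 := ((h1.const_mul (c⁻¹ * c ^ n)).mul h2).ofReal_comp
    refine (HasDerivAt.deriv h3).trans ?_
    congr 1
    simp only [Polynomial.eval_sub, Polynomial.eval_mul, Polynomial.eval_C, Polynomial.eval_X,
      Pi.pow_apply, Pi.neg_apply]
    push_cast
    ring

/-- For every `σ > 0` there is `C > 0` such that for all `t, u > 0`,
`|∂_t^σ[t e^{-t²/(4u)}]| ≤ C e^{-t²/(8u)} u^{(1-σ)/2}`. -/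
theorem fracDeriv_subordinator_bound (σ : ℝ) (hσ : 0 < σ) :
    ∃ C > 0, ∀ t u : ℝ, 0 < t → 0 < u →
      ‖fracDeriv σ (fun t => (t : ℂ) * Complex.exp (-((t : ℂ) ^ 2 / (4 * (u : ℂ))))) t‖ ≤
        C * Real.exp (-(t ^ 2 / (8 * u))) * u ^ ((1 - σ) / 2) := by
  obtain ⟨P, hP⟩ := iteratedDeriv_linear_mul_gaussian (mIdx σ)
  obtain ⟨A, hA, hPA⟩ := poly_le_exp_sq P
  have hβ : 0 < (mIdx σ : ℝ) - σ := by
    have := Nat.lt_floor_add_one σ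
    simp only [mIdx]
    push_cast
    linarith
  unfold fracDeriv
  set m := mIdx σ
  set β : ℝ := (m : ℝ) - σ with hβdef
  set K := Complex.exp (-(Complex.I * (Real.pi : ℂ) * (β : ℂ))) / Complex.Gamma (β : ℂ)
  set J : ℝ := 8 ^ (β / 2) * (1 / 2) * Real.Gamma (β / 2)
  have hJ : 0 < J := by
    have := Real.Gamma_pos_of_pos (half_pos hβ)
    positivity
  refine ⟨‖K‖ * (A * J) + 1, by positivity, fun t u ht hu => ?_⟩
  set c : ℝ := u ^ (-(1 / 2) : ℝ) with hc
  have hcpos : 0 < c := Real.rpow_pos_of_pos hu _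
  have hc2 : c ^ 2 = u⁻¹ := by
    rw [hc, ← Real.rpow_natCast, ← Real.rpow_mul hu.le, ← Real.rpow_neg_one]
    norm_num
  have hF : (fun t : ℝ => (t : ℂ) * Complex.exp (-((t : ℂ) ^ 2 / (4 * (u : ℂ))))) =
      fun t : ℝ => ((t * Real.exp (-((c * t) ^ 2 / 4)) : ℝ) : ℂ) := by
    funext x
    have : (c * x) ^ 2 / 4 = x ^ 2 / (4 * u) := by
      rw [mul_pow, hc2]
      field_simp
    rw [this]
    push_cast
    rfl
  rw [hF, hP c hcpos.ne', norm_mul]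
  set M : ℝ := A * (c⁻¹ * c ^ m) * Real.exp (-(t ^ 2 / (8 * u))) with hM
  have hb : 0 < 1 / (8 * u) := by positivity
  have hint := (integrableOn_rpow_mul_exp_neg_mul_rpow (s := β - 1) (p := 2) (b := 1 / (8 * u))
    (by linarith) (by norm_num) hb).const_mul M
  have hval := integral_rpow_mul_exp_neg_mul_rpow (p := 2) (q := β - 1) (b := 1 / (8 * u))
    (by norm_num) (by linarith) hb
  have key := norm_integral_le_of_norm_le (μ := volume.restrict (Set.Ioi (0 : ℝ)))
    (f := fun s : ℝ => ((c⁻¹ * c ^ m * P.eval (c * (t + s)) *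
      Real.exp (-((c * (t + s)) ^ 2 / 4)) : ℝ) : ℂ) * ((s ^ (β - 1) : ℝ) : ℂ)) hint (by
    filter_upwards [ae_restrict_mem measurableSet_Ioi] with s hs
    have hs : 0 < s := hs
    rw [← Complex.ofReal_mul, Complex.norm_real, Real.norm_eq_abs, abs_mul, abs_mul, abs_mul,
      abs_of_pos (Real.exp_pos _), abs_of_pos (show 0 < c⁻¹ * c ^ m by positivity),
      abs_of_pos (Real.rpow_pos_of_pos hs _)]
    have h1 : |P.eval (c * (t + s))| * Real.exp (-((c * (t + s)) ^ 2 / 4)) ≤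
        A * (Real.exp (-(t ^ 2 / (8 * u))) * Real.exp (-(1 / (8 * u)) * s ^ (2 : ℝ))) := by
      refine (mul_le_mul_of_nonneg_right (hPA _) (Real.exp_pos _).le).trans ?_
      rw [mul_assoc, ← Real.exp_add, ← Real.exp_add]
      refine mul_le_mul_of_nonneg_left (Real.exp_le_exp.2 ?_) hA
      rw [mul_pow, hc2, Real.rpow_two]
      have : u⁻¹ * (t + s) ^ 2 / 8 - u⁻¹ * (t + s) ^ 2 / 4 -
          (-(t ^ 2 / (8 * u)) + -(1 / (8 * u)) * s ^ 2) = -(u⁻¹ * (t * s) / 4) := by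
        field_simp
        ring
      have h0 : 0 ≤ u⁻¹ * (t * s) / 4 := by positivity
      linarith
    calc _ = (c⁻¹ * c ^ m * s ^ (β - 1)) *
          (|P.eval (c * (t + s))| * Real.exp (-((c * (t + s)) ^ 2 / 4))) := by ring
      _ ≤ _ := mul_le_mul_of_nonneg_left h1 (by positivity)
      _ = _ := by rw [hM]; ring)
  rw [integral_const_mul, hval] at key
  have hscale : c⁻¹ * c ^ m * ((1 / (8 * u)) ^ (-(β - 1 + 1) / 2) * (1 / 2) *
      Real.Gamma ((β - 1 + 1) / 2)) = J * u ^ ((1 - σ) / 2) := by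
    have e1 : (1 / (8 * u)) ^ (-(β - 1 + 1) / 2) = 8 ^ (β / 2) * u ^ (β / 2) := by
      rw [one_div, Real.inv_rpow (by positivity), ← Real.rpow_neg (by positivity),
        ← Real.mul_rpow (by norm_num) hu.le]
      congr 1
      ring
    have e2 : c⁻¹ * c ^ m = u ^ ((1 - m : ℝ) / 2) := by
      rw [hc, ← Real.rpow_natCast, ← Real.rpow_mul hu.le, ← Real.rpow_neg hu.le,
        ← Real.rpow_add hu]
      congr 1
      ring
    have e3 : u ^ ((1 - m : ℝ) / 2) * u ^ (β / 2) = u ^ ((1 - σ) / 2) := by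
      rw [← Real.rpow_add hu, hβdef]
      congr 1
      ring
    rw [e1, e2, ← e3, sub_add_cancel]
    ring
  have hfin : 0 ≤ Real.exp (-(t ^ 2 / (8 * u))) * u ^ ((1 - σ) / 2) := by positivity
  refine (mul_le_mul_of_nonneg_left key (norm_nonneg K)).trans ?_
  calc _ = ‖K‖ * (A * Real.exp (-(t ^ 2 / (8 * u))) * (c⁻¹ * c ^ m *
        ((1 / (8 * u)) ^ (-(β - 1 + 1) / 2) * (1 / 2) * Real.Gamma ((β - 1 + 1) / 2)))) := by
        rw [hM]; ring
    _ = ‖K‖ * (A * J) * (Real.exp (-(t ^ 2 / (8 * u))) * u ^ ((1 - σ) / 2)) := by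
        rw [hscale]; ring
    _ ≤ _ := by rw [mul_assoc (_ + 1)]; nlinarith
end

section
/- Let n ≥ 1 and σ > 0, and let m = ⌊σ⌋ + 1 be the smallest integer strictly greater than σ. There exists C > 0 such that for all z ∈ ℝⁿ and all t, s > 0, the m-th derivative in t of t ↦ (t+s)/((t+s)² + |z|²)^{(n+1)/2} satisfies |∂^m/∂t^m [(t+s)/((t+s)² + |z|²)^{(n+1)/2}]| ≤ C / ((t+|z|)^{n+σ/2} (t+s)^{m-σ/2}). -/
/-!
The `m`-th derivative of the Poisson kernel `u / (u² + r²)^((n+1)/2)` in `u` is at most a constant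
times `(u² + r²)^(-(n+m)/2)`, as homogeneity of degree `-n-m` in `(u, r)` suggests. This is
`exists_iteratedDeriv_monomial_bound`, proved by induction on `m` for all functions
`u^k (u² + r²)^(-a)` at once, since differentiation sends such a function to a combination of two
others of the same kind and of degree one less.

With `u = t + s`, `r = |z|` and `R = (u² + r²)^(1/2)`, split
`R^(-(n+m)) = R^(-(n+σ/2)) R^(-(m-σ/2))`. Both exponents `n + σ/2` and `m - σ/2` are nonnegative,
and `2 R ≥ t + |z|` and `R ≥ t + s`, which gives the claim with a constant enlarged by
`2^(n+σ/2)`.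
-/

open Real MeasureTheory

/-- The derivative identity `f_{k,a}' = k f_{k-1,a} - 2a f_{k+1,a+1}` for
`f_{k,a}(u) = u^k (u² + r²)^(-a)`. -/
lemma hasDerivAt_monomial (k : ℕ) (a r u : ℝ) (hu : 0 < u) :
    HasDerivAt (fun u : ℝ => u ^ k * (u ^ 2 + r ^ 2) ^ (-a))
      (k * (u ^ (k - 1) * (u ^ 2 + r ^ 2) ^ (-a)) +
        (-2 * a) * (u ^ (k + 1) * (u ^ 2 + r ^ 2) ^ (-(a + 1)))) u := by
  have hQ : 0 < u ^ 2 + r ^ 2 := by positivity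
  have h1 : HasDerivAt (fun u : ℝ => u ^ 2 + r ^ 2) (2 * u) u := by
    simpa using (hasDerivAt_pow 2 u).add_const (r ^ 2)
  have h2 := h1.rpow_const (p := -a) (Or.inl hQ.ne')
  refine ((hasDerivAt_pow k u).mul h2).congr_deriv ?_
  rw [show -a - 1 = -(a + 1) by ring]
  ring

lemma contDiffAt_monomial (m k : ℕ) (a r u : ℝ) (hu : 0 < u) :
    ContDiffAt ℝ m (fun u : ℝ => u ^ k * (u ^ 2 + r ^ 2) ^ (-a)) u := by
  have hQ : 0 < u ^ 2 + r ^ 2 := by positivity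
  exact (contDiffAt_id.pow k).mul
    (((contDiffAt_id.pow 2).add contDiffAt_const).rpow_const_of_ne hQ.ne')

/-- The `m`-th derivative of `u^k (u² + r²)^(-a)` is bounded, uniformly in `r`, by the power of
`u² + r²` with the same homogeneity. -/
lemma exists_iteratedDeriv_monomial_bound (m : ℕ) : ∀ (k : ℕ) (a : ℝ), ∃ C : ℝ, 0 ≤ C ∧
    ∀ r u : ℝ, 0 < u →
      |iteratedDeriv m (fun u : ℝ => u ^ k * (u ^ 2 + r ^ 2) ^ (-a)) u| ≤
        C * (u ^ 2 + r ^ 2) ^ (((k : ℝ) - m) / 2 - a) := by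
  induction m with
  | zero =>
    intro k a
    refine ⟨1, zero_le_one, fun r u hu => ?_⟩
    have hQ : 0 < u ^ 2 + r ^ 2 := by positivity
    rw [iteratedDeriv_zero, abs_of_nonneg (by positivity), one_mul, sub_eq_add_neg _ a,
      Real.rpow_add hQ]
    gcongr
    calc u ^ k = (u ^ 2) ^ (((k : ℝ) - (0 : ℕ)) / 2) := by
          rw [← Real.rpow_natCast u 2, ← Real.rpow_mul hu.le, ← Real.rpow_natCast]
          congr 1
          push_cast
          ring
      _ ≤ _ := by
          refine Real.rpow_le_rpow (by positivity) (by nlinarith [sq_nonneg r]) ?_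
          simp only [Nat.cast_zero, sub_zero]
          positivity
  | succ m ih =>
    intro k a
    obtain ⟨C₁, hC₁, h₁⟩ := ih (k - 1) a
    obtain ⟨C₂, hC₂, h₂⟩ := ih (k + 1) (a + 1)
    refine ⟨k * C₁ + |-2 * a| * C₂, by positivity, fun r u hu => ?_⟩
    have hderiv : deriv (fun u : ℝ => u ^ k * (u ^ 2 + r ^ 2) ^ (-a)) =ᶠ[nhds u]
        (fun u : ℝ => (k : ℝ) * (u ^ (k - 1) * (u ^ 2 + r ^ 2) ^ (-a))) +
        fun u : ℝ => (-2 * a) * (u ^ (k + 1) * (u ^ 2 + r ^ 2) ^ (-(a + 1))) := by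
      filter_upwards [lt_mem_nhds hu] with v hv
      exact (hasDerivAt_monomial k a r v hv).deriv
    rw [iteratedDeriv_succ', hderiv.iteratedDeriv_eq,
      iteratedDeriv_add (contDiffAt_const.mul (contDiffAt_monomial m _ _ _ _ hu))
        (contDiffAt_const.mul (contDiffAt_monomial m _ _ _ _ hu)),
      iteratedDeriv_const_mul_field, iteratedDeriv_const_mul_field, add_mul]
    refine (abs_add_le _ _).trans (add_le_add ?_ ?_)
    · rw [abs_mul, Nat.abs_cast, mul_assoc]
      -- For `k = 0` the truncated exponent `k - 1` is harmless: its coefficient vanishes.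
      rcases Nat.eq_zero_or_pos k with rfl | hk
      · simp
      · refine mul_le_mul_of_nonneg_left ((h₁ r u hu).trans_eq ?_) (by positivity)
        congr 2
        rw [Nat.cast_sub hk]
        push_cast
        ring
    · rw [abs_mul, mul_assoc]
      refine mul_le_mul_of_nonneg_left ((h₂ r u hu).trans_eq ?_) (by positivity)
      congr 2
      push_cast
      ring

/-- For `n ≥ 1` and `σ > 0` there is `C > 0` such that for all `z ∈ ℝⁿ` and `t, s > 0`,
`|∂^m/∂t^m [(t+s)/((t+s)²+|z|²)^{(n+1)/2}]| ≤ C/((t+|z|)^{n+σ/2} (t+s)^{m-σ/2})`. -/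
theorem iteratedDeriv_poisson_bound (n : ℕ) (hn : 1 ≤ n) (σ : ℝ) (hσ : 0 < σ) :
    ∃ C > 0, ∀ (z : EuclideanSpace ℝ (Fin n)) (t s : ℝ), 0 < t → 0 < s →
      |iteratedDeriv (mIdx σ)
          (fun t : ℝ => (t + s) / ((t + s) ^ 2 + ‖z‖ ^ 2) ^ (((n : ℝ) + 1) / 2)) t| ≤
        C / ((t + ‖z‖) ^ ((n : ℝ) + σ / 2) * (t + s) ^ ((mIdx σ : ℝ) - σ / 2)) := by
  obtain ⟨C, hC, h⟩ := exists_iteratedDeriv_monomial_bound (mIdx σ) 1 (((n : ℝ) + 1) / 2)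
  have hm : σ < (mIdx σ : ℝ) := by
    simpa [mIdx] using Nat.lt_floor_add_one σ
  generalize mIdx σ = m at *
  have hα : 0 ≤ (n : ℝ) + σ / 2 := by positivity
  have hβ : 0 ≤ (m : ℝ) - σ / 2 := by linarith
  refine ⟨(C + 1) * 2 ^ ((n : ℝ) + σ / 2), by positivity, fun z t s ht hs => ?_⟩
  have hz := norm_nonneg z
  generalize ‖z‖ = r at *
  have hu : 0 < t + s := by positivity
  have hQ : 0 < (t + s) ^ 2 + r ^ 2 := by positivity
  have hshift : iteratedDeriv m
      (fun t : ℝ => (t + s) / ((t + s) ^ 2 + r ^ 2) ^ (((n : ℝ) + 1) / 2)) t =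
      iteratedDeriv m
        (fun u : ℝ => u ^ 1 * (u ^ 2 + r ^ 2) ^ (-(((n : ℝ) + 1) / 2))) (t + s) := by
    refine Eq.trans ?_ (congrFun (iteratedDeriv_comp_add_const m _ s) t)
    congr 1
    funext v
    rw [Real.rpow_neg (by positivity), pow_one, div_eq_mul_inv]
  rw [hshift]
  refine (h r (t + s) hu).trans ?_
  set R := √((t + s) ^ 2 + r ^ 2) with hR
  have hRpos : 0 < R := Real.sqrt_pos.2 hQ
  have hR1 : t + s ≤ R := Real.le_sqrt_of_sq_le (by nlinarith [sq_nonneg r])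
  have hR2 : r ≤ R := Real.le_sqrt_of_sq_le (by nlinarith [sq_nonneg (t + s)])
  have hsplit : ((t + s) ^ 2 + r ^ 2) ^ ((((1 : ℕ) : ℝ) - m) / 2 - ((n : ℝ) + 1) / 2) *
      (R ^ ((n : ℝ) + σ / 2) * R ^ ((m : ℝ) - σ / 2)) = 1 := by
    rw [← Real.rpow_add hRpos, hR, Real.sqrt_eq_rpow, ← Real.rpow_mul hQ.le,
      ← Real.rpow_add hQ]
    convert Real.rpow_zero _ using 2
    push_cast
    ring
  have hA : (t + r) ^ ((n : ℝ) + σ / 2) ≤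
      2 ^ ((n : ℝ) + σ / 2) * R ^ ((n : ℝ) + σ / 2) := by
    rw [← Real.mul_rpow zero_le_two hRpos.le]
    exact Real.rpow_le_rpow (by positivity) (by linarith) hα
  have hB : (t + s) ^ ((m : ℝ) - σ / 2) ≤ R ^ ((m : ℝ) - σ / 2) :=
    Real.rpow_le_rpow hu.le hR1 hβ
  rw [le_div_iff₀ (by positivity)]
  set X := ((t + s) ^ 2 + r ^ 2) ^ ((((1 : ℕ) : ℝ) - m) / 2 - ((n : ℝ) + 1) / 2) with hX
  have hX0 : 0 < X := Real.rpow_pos_of_pos hQ _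
  calc C * X * ((t + r) ^ ((n : ℝ) + σ / 2) * (t + s) ^ ((m : ℝ) - σ / 2))
      ≤ (C + 1) * X * (2 ^ ((n : ℝ) + σ / 2) * R ^ ((n : ℝ) + σ / 2) *
          R ^ ((m : ℝ) - σ / 2)) := by
        gcongr
        linarith
    _ = (C + 1) * 2 ^ ((n : ℝ) + σ / 2) *
          (X * (R ^ ((n : ℝ) + σ / 2) * R ^ ((m : ℝ) - σ / 2))) := by ring
    _ = (C + 1) * 2 ^ ((n : ℝ) + σ / 2) := by rw [hsplit, mul_one]
end

section
/- Let n ≥ 1 and σ > 0, let m = ⌊σ⌋ + 1 be the smallest integer strictly greater than σ, and let k be an integer with 0 ≤ k ≤ (m+1)/2. There exists C > 0 such that for all z ∈ ℝⁿ, φ^k(z) = ∫_0^∞ (1+v)^{m+1-2k} v^{m-σ-1} / ((1+v)² + |z|²)^{(n+2(m-k)+1)/2} dv ≤ C (1+|z|)^{-(n+σ)}. -/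
open Real MeasureTheory

/-- The function `φ^k(z) = ∫_0^∞ (1+v)^{m+1-2k} v^{m-σ-1}/((1+v)²+|z|²)^{(n+2(m-k)+1)/2} dv`. -/
noncomputable def phiK (n : ℕ) (σ : ℝ) (k : ℕ) (z : EuclideanSpace ℝ (Fin n)) : ℝ :=
  ∫ v in Set.Ioi (0 : ℝ),
    (1 + v) ^ ((mIdx σ : ℝ) + 1 - 2 * k) * v ^ ((mIdx σ : ℝ) - σ - 1) /
      ((1 + v) ^ 2 + ‖z‖ ^ 2) ^ (((n : ℝ) + 2 * ((mIdx σ : ℝ) - k) + 1) / 2)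

lemma integrableOn_rpow_mul_one_add_rpow {a p : ℝ} (ha : 0 < a) (hap : a < p) :
    IntegrableOn (fun t : ℝ => t ^ (a - 1) * (1 + t) ^ (-p)) (Set.Ioi 0) := by
  have hmeas : Measurable (fun t : ℝ => t ^ (a - 1) * (1 + t) ^ (-p)) := by fun_prop
  rw [← Set.Ioc_union_Ioi_eq_Ioi (zero_le_one' ℝ)]
  refine IntegrableOn.union ?_ ?_
  · have h1 : IntegrableOn (fun t : ℝ => t ^ (a - 1)) (Set.Ioc 0 1) := by
      rw [← intervalIntegrable_iff_integrableOn_Ioc_of_le zero_le_one]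
      exact intervalIntegral.intervalIntegrable_rpow' (by linarith)
    refine Integrable.mono' h1 hmeas.aestronglyMeasurable ?_
    filter_upwards [ae_restrict_mem measurableSet_Ioc] with t ht
    have ht0 : 0 < t := ht.1
    rw [Real.norm_of_nonneg (by positivity)]
    exact mul_le_of_le_one_right (by positivity)
      (Real.rpow_le_one_of_one_le_of_nonpos (by linarith) (by linarith))
  · have h1 : IntegrableOn (fun t : ℝ => t ^ (a - 1 - p)) (Set.Ioi 1) :=
      integrableOn_Ioi_rpow_of_lt (by linarith) one_pos
    refine Integrable.mono' h1 hmeas.aestronglyMeasurable ?_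
    filter_upwards [ae_restrict_mem measurableSet_Ioi] with t ht
    have ht0 : 0 < t := lt_trans one_pos ht
    rw [Real.norm_of_nonneg (by positivity), sub_eq_add_neg (a - 1) p,
      Real.rpow_add ht0]
    exact mul_le_mul_of_nonneg_left
      (Real.rpow_le_rpow_of_nonpos ht0 (by linarith) (by linarith)) (by positivity)

lemma majorant_eq_scaled {a p R v : ℝ} (hR : 0 < R) (hv : 0 < v) :
    v ^ (a - 1) * (R + v) ^ (-p)
      = R ^ (a - 1 - p) * ((R⁻¹ * v) ^ (a - 1) * (1 + R⁻¹ * v) ^ (-p)) := by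
  have hw : 0 < R⁻¹ * v := by positivity
  have h1 : v = R * (R⁻¹ * v) := by field_simp
  have h2 : R + v = R * (1 + R⁻¹ * v) := by field_simp
  rw [h2, Real.mul_rpow hR.le (by positivity), sub_eq_add_neg (a - 1) p, Real.rpow_add hR]
  conv_lhs => rw [h1, Real.mul_rpow hR.le hw.le]
  have h3 : R⁻¹ * (R * (R⁻¹ * v)) = R⁻¹ * v := by field_simp
  rw [h3]
  ring

/-- Here `s = |z|`, `j = m + 1 - 2k`, `b = m - σ - 1` and `p = n + m`, so that `j + p` is twice the
exponent in the denominator of `φ^k`. -/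
lemma phiK_integrand_le {s v j b p : ℝ} (hs : 0 ≤ s) (hv : 0 < v) (hj : 0 ≤ j) (hp : 0 ≤ p) :
    (1 + v) ^ j * v ^ b / ((1 + v) ^ 2 + s ^ 2) ^ ((j + p) / 2)
      ≤ 2 ^ ((j + p) / 2) * (v ^ b * (1 + s + v) ^ (-p)) := by
  have hY : 0 < 1 + s + v := by positivity
  have hden : (1 + s + v) ^ (j + p) ≤
      2 ^ ((j + p) / 2) * ((1 + v) ^ 2 + s ^ 2) ^ ((j + p) / 2) := by
    rw [← Real.mul_rpow (by norm_num) (by positivity)]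
    have : (1 + s + v) ^ (j + p) = ((1 + s + v) ^ 2) ^ ((j + p) / 2) := by
      rw [← Real.rpow_natCast, ← Real.rpow_mul hY.le]
      congr 1
      push_cast
      ring
    rw [this]
    exact Real.rpow_le_rpow (by positivity) (by nlinarith [sq_nonneg (1 + v - s)]) (by linarith)
  have hnum : (1 + v) ^ j ≤ (1 + s + v) ^ j :=
    Real.rpow_le_rpow (by positivity) (by linarith) hj
  rw [div_le_iff₀ (by positivity)]
  have hsplit : (1 + s + v) ^ j = (1 + s + v) ^ (-p) * (1 + s + v) ^ (j + p) := by
    rw [← Real.rpow_add hY]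
    congr 1
    ring
  calc (1 + v) ^ j * v ^ b ≤ (1 + s + v) ^ j * v ^ b := by gcongr
    _ = (1 + s + v) ^ (-p) * (1 + s + v) ^ (j + p) * v ^ b := by rw [← hsplit]
    _ ≤ (1 + s + v) ^ (-p) *
        (2 ^ ((j + p) / 2) * ((1 + v) ^ 2 + s ^ 2) ^ ((j + p) / 2)) * v ^ b := by gcongr
    _ = _ := by ring

/-- For `n ≥ 1`, `σ > 0` and `0 ≤ k ≤ (m+1)/2` there is `C > 0` with
`φ^k(z) ≤ C (1+|z|)^{-(n+σ)}` for all `z ∈ ℝⁿ`. -/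
theorem phiK_bound (n : ℕ) (hn : 1 ≤ n) (σ : ℝ) (hσ : 0 < σ) (k : ℕ)
    (hk : 2 * k ≤ mIdx σ + 1) :
    ∃ C > 0, ∀ z : EuclideanSpace ℝ (Fin n),
      phiK n σ k z ≤ C * (1 + ‖z‖) ^ (-((n : ℝ) + σ)) := by
  have hm : σ < (mIdx σ : ℝ) := by
    simpa [mIdx] using Nat.lt_floor_add_one σ
  have hj : (0 : ℝ) ≤ (mIdx σ : ℝ) + 1 - 2 * k := by
    have : (2 * k : ℝ) ≤ (mIdx σ : ℝ) + 1 := by exact_mod_cast hk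
    linarith
  unfold phiK
  generalize (mIdx σ : ℝ) = m at hm hj
  have hn0 : (0 : ℝ) ≤ n := n.cast_nonneg
  set p : ℝ := n + m with hp
  set j : ℝ := m + 1 - 2 * k with hjdef
  set h : ℝ → ℝ := fun t => t ^ (m - σ - 1) * (1 + t) ^ (-p) with hh
  have hint : IntegrableOn h (Set.Ioi 0) :=
    integrableOn_rpow_mul_one_add_rpow (by linarith) (by linarith)
  have hB : 0 ≤ ∫ t in Set.Ioi (0 : ℝ), h t :=
    setIntegral_nonneg measurableSet_Ioi fun t ht => by
      have : (0 : ℝ) < t := ht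
      simp only [hh]
      positivity
  -- The `+ 1` gives `C > 0` without showing that the Beta-type integral is nonzero.
  refine ⟨2 ^ ((j + p) / 2) * (∫ t in Set.Ioi (0 : ℝ), h t) + 1, by positivity, fun z => ?_⟩
  have hR : 0 < 1 + ‖z‖ := by positivity
  have hexp : ((n : ℝ) + 2 * (m - k) + 1) / 2 = (j + p) / 2 := by
    rw [hp, hjdef]
    ring
  rw [hexp]
  have hscaled : IntegrableOn (fun v => h ((1 + ‖z‖)⁻¹ * v)) (Set.Ioi 0) := by
    rw [integrableOn_Ioi_comp_mul_left_iff h 0 (inv_pos.2 hR), mul_zero]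
    exact hint
  have hle : (∫ v in Set.Ioi (0 : ℝ),
      (1 + v) ^ j * v ^ (m - σ - 1) / ((1 + v) ^ 2 + ‖z‖ ^ 2) ^ ((j + p) / 2)) ≤
      ∫ v in Set.Ioi (0 : ℝ), 2 ^ ((j + p) / 2) *
        ((1 + ‖z‖) ^ (m - σ - 1 - p) * h ((1 + ‖z‖)⁻¹ * v)) := by
    refine integral_mono_of_nonneg ?_ ((hscaled.const_mul _).const_mul _) ?_
    · filter_upwards [ae_restrict_mem measurableSet_Ioi] with v hv
      have : (0 : ℝ) < v := hv
      simp only [Pi.zero_apply]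
      positivity
    · filter_upwards [ae_restrict_mem measurableSet_Ioi] with v hv
      refine (phiK_integrand_le (norm_nonneg z) hv hj (by linarith)).trans_eq ?_
      rw [majorant_eq_scaled hR hv]
  refine hle.trans ?_
  rw [integral_const_mul, integral_const_mul, integral_comp_mul_left_Ioi h 0 (inv_pos.2 hR),
    mul_zero, inv_inv, smul_eq_mul]
  have hpow : (1 + ‖z‖) ^ (m - σ - 1 - p) * (1 + ‖z‖) = (1 + ‖z‖) ^ (-((n : ℝ) + σ)) := by
    rw [← Real.rpow_add_one hR.ne']
    congr 1
    rw [hp]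
    ring
  have hpos : 0 < (1 + ‖z‖) ^ (-((n : ℝ) + σ)) := by positivity
  rw [← mul_assoc ((1 + ‖z‖) ^ (m - σ - 1 - p)), hpow]
  linarith
end

section
/- Let n ≥ 1 and σ > 0, and define ψ : ℝⁿ \ {0} → ℝ by ψ(ξ) = |ξ|^σ e^{-|ξ|}. For every multi-index η ∈ ℕⁿ, sup over x ∈ ℝⁿ with |x| = 1 of ∫_0^∞ t^{2|η|} |(∂^η ψ)(t x)|² dt/t is finite, where ∂^η denotes the partial derivative of order η and |η| = η_1 + ⋯ + η_n. -/
/-!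
Away from the origin, `∂^η ψ` is a finite sum of terms `h(ξ) e^{-|ξ|}` with `h` smooth on `ℝⁿ \ {0}`
and positively homogeneous of a degree `σ - j`, `0 ≤ j ≤ |η|`. Indeed this form is stable under a
partial derivative, with `|η|` increased by one: `∂ᵢh` is homogeneous of degree `σ - j - 1`, while
differentiating the exponential multiplies `h` by `-ξᵢ/|ξ|`, which is homogeneous of degree `0`
(`ExpHom.partialDeriv`). A continuous homogeneous function of degree `d` is bounded by `C |ξ|^d`
(compactness of the sphere), so `|∂^η ψ(ξ)| ≤ C (|ξ|^{σ-|η|} + |ξ|^σ) e^{-|ξ|}` (`ExpHom.bound`).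
On the ray `t x` with `|x| = 1` the integrand is then dominated, uniformly in `x`, by
`2C² (t^{2σ-1} + t^{2σ+2|η|-1}) e^{-t}`, whose integral is a sum of two Gamma integrals; both
converge because `σ > 0`.
-/

open Real MeasureTheory

/-- The partial derivative in the `i`-th coordinate direction of `f : ℝⁿ → ℝ`. -/
noncomputable def partialDerivIdx (n : ℕ) (i : Fin n)
    (f : EuclideanSpace ℝ (Fin n) → ℝ) : EuclideanSpace ℝ (Fin n) → ℝ :=
  fun x => fderiv ℝ f x (EuclideanSpace.single i 1)

/-- The partial derivative `∂^η` of multi-index order `η ∈ ℕⁿ`: apply `η i` times the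
partial derivative in direction `i`, for each coordinate `i`. -/
noncomputable def multiDeriv {n : ℕ} (η : Fin n → ℕ)
    (f : EuclideanSpace ℝ (Fin n) → ℝ) : EuclideanSpace ℝ (Fin n) → ℝ :=
  (List.finRange n).foldl (fun g i => (partialDerivIdx n i)^[η i] g) f

open scoped ContDiff Topology

/-- `h` is smooth away from the origin and positively homogeneous of degree `d` there. -/
structure HomSmooth {n : ℕ} (d : ℝ) (h : EuclideanSpace ℝ (Fin n) → ℝ) : Prop where
  smooth : ∀ x, x ≠ 0 → ContDiffAt ℝ ∞ h x
  hom : ∀ t : ℝ, 0 < t → ∀ x, x ≠ 0 → h (t • x) = t ^ d * h x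

namespace HomSmooth

variable {n : ℕ} {d e : ℝ} {h g : EuclideanSpace ℝ (Fin n) → ℝ}

lemma mul (hh : HomSmooth d h) (hg : HomSmooth e g) :
    HomSmooth (d + e) (fun x => h x * g x) where
  smooth x hx := (hh.smooth x hx).mul (hg.smooth x hx)
  hom t ht x hx := by
    rw [hh.hom t ht x hx, hg.hom t ht x hx, Real.rpow_add ht]
    ring

lemma norm_rpow (d : ℝ) : HomSmooth d (fun x : EuclideanSpace ℝ (Fin n) => ‖x‖ ^ d) where
  smooth x hx := (contDiffAt_norm ℝ hx).rpow_const_of_ne (norm_ne_zero_iff.2 hx)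
  hom t ht x hx := by
    rw [norm_smul, Real.norm_of_nonneg ht.le, Real.mul_rpow ht.le (norm_nonneg _)]

lemma partialDeriv (hh : HomSmooth d h) (i : Fin n) :
    HomSmooth (d - 1) (partialDerivIdx n i h) where
  smooth x hx := by
    have h1 : ContDiffAt ℝ ∞ (fderiv ℝ h) x :=
      (hh.smooth x hx).fderiv_right (by simp)
    exact h1.clm_apply contDiffAt_const
  hom t ht x hx := by
    have h1 : (fun y => h (t • y)) =ᶠ[𝓝 x] fun y => t ^ d * h y := by
      filter_upwards [isOpen_ne.mem_nhds hx] with y hy using hh.hom t ht y hy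
    have h2 := h1.fderiv_eq (𝕜 := ℝ)
    rw [fderiv_comp_smul, fderiv_const_mul
      ((hh.smooth x hx).differentiableAt (by simp))] at h2
    have h3 := congrArg (fun L => L (EuclideanSpace.single i 1)) h2
    simp only [smul_apply, smul_eq_mul] at h3
    unfold partialDerivIdx
    rw [Real.rpow_sub_one ht.ne']
    field_simp
    linarith

lemma bound (hh : HomSmooth d h) : ∃ C : ℝ, 0 ≤ C ∧ ∀ x, x ≠ 0 → |h x| ≤ C * ‖x‖ ^ d := by
  have hc : ContinuousOn h (Metric.sphere 0 1) := fun x hx =>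
    (hh.smooth x (by rintro rfl; simp at hx)).continuousAt.continuousWithinAt
  obtain ⟨C, hC⟩ := (isCompact_sphere (0 : EuclideanSpace ℝ (Fin n)) 1).exists_bound_of_continuousOn
    hc
  refine ⟨max C 0, le_max_right _ _, fun x hx => ?_⟩
  have hx0 : 0 < ‖x‖ := norm_pos_iff.2 hx
  have h1 : ‖‖x‖⁻¹ • x‖ = 1 := by
    rw [norm_smul, norm_inv, norm_norm, inv_mul_cancel₀ hx0.ne']
  have h2 := hh.hom ‖x‖ hx0 (‖x‖⁻¹ • x) (by rw [← norm_ne_zero_iff, h1]; simp)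
  rw [smul_smul, mul_inv_cancel₀ hx0.ne', one_smul] at h2
  rw [h2, abs_mul, abs_of_nonneg (Real.rpow_nonneg hx0.le d), mul_comm]
  have h3 := hC (‖x‖⁻¹ • x) (by simp [h1])
  rw [Real.norm_eq_abs] at h3
  have h4 := h3.trans (le_max_left C 0)
  gcongr

end HomSmooth

/-- Functions which away from the origin are finite sums of terms `h(x) e^{-|x|}`, where `h` is
smooth off the origin and homogeneous of degree `σ - j` for some natural number `j ≤ k`. -/
inductive ExpHom {n : ℕ} (σ : ℝ) (k : ℕ) : (EuclideanSpace ℝ (Fin n) → ℝ) → Prop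
  | base {j : ℕ} {h : EuclideanSpace ℝ (Fin n) → ℝ} (hj : j ≤ k) (hh : HomSmooth (σ - j) h) :
      ExpHom σ k (fun x => h x * Real.exp (-‖x‖))
  | add {f g : EuclideanSpace ℝ (Fin n) → ℝ} (hf : ExpHom σ k f) (hg : ExpHom σ k g) :
      ExpHom σ k (fun x => f x + g x)
  | congr {f g : EuclideanSpace ℝ (Fin n) → ℝ} (hf : ExpHom σ k f) (hfg : ∀ x, x ≠ 0 → g x = f x) :
      ExpHom σ k g

namespace ExpHom

variable {n : ℕ} {σ : ℝ} {k : ℕ} {f : EuclideanSpace ℝ (Fin n) → ℝ}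

lemma differentiableAt (hf : ExpHom σ k f) : ∀ x, x ≠ 0 → DifferentiableAt ℝ f x := by
  induction hf with
  | base hj hh =>
    intro x hx
    exact ((hh.smooth x hx).differentiableAt (by simp)).mul
      ((contDiffAt_norm ℝ hx (n := 1)).differentiableAt (by simp)).neg.exp
  | add _ _ ihf ihg => exact fun x hx => (ihf x hx).add (ihg x hx)
  | congr _ hfg ih =>
    intro x hx
    refine (ih x hx).congr_of_eventuallyEq ?_
    filter_upwards [isOpen_ne.mem_nhds hx] with y hy using hfg y hy

lemma partialDeriv (hf : ExpHom σ k f) (i : Fin n) :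
    ExpHom σ (k + 1) (partialDerivIdx n i f) := by
  induction hf with
  | @base j h hj hh =>
    -- `∂ᵢ|x|` is homogeneous of degree `1 - 1 = 0`, being a derivative of `|x| ^ 1`.
    have hN := (HomSmooth.norm_rpow (n := n) 1).partialDeriv i
    have hneg : HomSmooth (n := n) 0 (fun _ => (-1 : ℝ)) :=
      ⟨fun _ _ => contDiffAt_const, fun t ht x hx => by simp⟩
    have h1 : HomSmooth (σ - (j + 1 : ℕ)) (partialDerivIdx n i h) := by
      have := hh.partialDeriv i
      rwa [sub_sub, ← Nat.cast_succ] at this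
    have h2 := (hh.mul hN).mul hneg
    have e2 : σ - j + (1 - 1) + 0 = σ - j := by ring
    rw [e2] at h2
    refine ((base (by omega) h1).add (base (k := k + 1) (by omega) h2)).congr fun x hx => ?_
    have hd1 : DifferentiableAt ℝ h x := (hh.smooth x hx).differentiableAt (by simp)
    have hd2 : DifferentiableAt ℝ (fun y : EuclideanSpace ℝ (Fin n) => ‖y‖) x :=
      (contDiffAt_norm ℝ hx (n := 1)).differentiableAt (by simp)
    have key := (hd1.hasFDerivAt.mul hd2.hasFDerivAt.neg.exp).fderiv
    simp only [partialDerivIdx, Real.rpow_one]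
    erw [key]
    simp
    ring
  | add hf hg ihf ihg =>
    refine (ihf.add ihg).congr fun x hx => ?_
    have := ((hf.differentiableAt x hx).hasFDerivAt.add
      (hg.differentiableAt x hx).hasFDerivAt).fderiv
    unfold partialDerivIdx
    erw [this]
    rfl
  | congr _ hfg ih =>
    refine ih.congr fun x hx => ?_
    unfold partialDerivIdx
    rw [Filter.EventuallyEq.fderiv_eq]
    filter_upwards [isOpen_ne.mem_nhds hx] with y hy using hfg y hy

lemma iterate (hf : ExpHom σ k f) (i : Fin n) (m : ℕ) :
    ExpHom σ (k + m) ((partialDerivIdx n i)^[m] f) := by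
  induction m with
  | zero => exact hf
  | succ m ih =>
    rw [Function.iterate_succ_apply', ← add_assoc]
    exact ih.partialDeriv i

lemma foldl (η : Fin n → ℕ) (l : List (Fin n)) (hf : ExpHom σ k f) :
    ExpHom σ (k + (l.map η).sum) (l.foldl (fun g i => (partialDerivIdx n i)^[η i] g) f) := by
  induction l generalizing k f with
  | nil => exact hf
  | cons i l ih =>
    simp only [List.map_cons, List.sum_cons, List.foldl_cons, ← add_assoc]
    exact ih (hf.iterate i (η i))

lemma bound (hf : ExpHom σ k f) : ∃ C : ℝ, 0 ≤ C ∧ ∀ x, x ≠ 0 →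
    |f x| ≤ C * ((‖x‖ ^ (σ - k) + ‖x‖ ^ σ) * Real.exp (-‖x‖)) := by
  induction hf with
  | @base j h hj hh =>
    obtain ⟨C, hC0, hC⟩ := hh.bound
    refine ⟨C, hC0, fun x hx => ?_⟩
    have hx0 : 0 < ‖x‖ := norm_pos_iff.2 hx
    have hj' : (j : ℝ) ≤ k := by exact_mod_cast hj
    have hp : ‖x‖ ^ (σ - j) ≤ ‖x‖ ^ (σ - k) + ‖x‖ ^ σ := by
      have p1 := Real.rpow_nonneg hx0.le (σ - k)
      have p2 := Real.rpow_nonneg hx0.le σ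
      rcases le_total ‖x‖ 1 with h1 | h1
      · have := Real.rpow_le_rpow_of_exponent_ge hx0 h1 (show σ - k ≤ σ - j by linarith)
        linarith
      · have := Real.rpow_le_rpow_of_exponent_le h1
          (show σ - j ≤ σ by linarith [Nat.cast_nonneg (α := ℝ) j])
        linarith
    rw [abs_mul, Real.abs_exp, ← mul_assoc]
    have := (hC x hx).trans (mul_le_mul_of_nonneg_left hp hC0)
    gcongr
  | add _ _ ihf ihg =>
    obtain ⟨C, hC0, hC⟩ := ihf
    obtain ⟨D, hD0, hD⟩ := ihg
    refine ⟨C + D, by positivity, fun x hx => (abs_add_le _ _).trans ?_⟩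
    rw [add_mul]
    exact add_le_add (hC x hx) (hD x hx)
  | congr _ hfg ih =>
    obtain ⟨C, hC0, hC⟩ := ih
    exact ⟨C, hC0, fun x hx => hfg x hx ▸ hC x hx⟩

end ExpHom

lemma expHom_multiDeriv {n : ℕ} (σ : ℝ) (η : Fin n → ℕ) :
    ExpHom σ (∑ i, η i) (multiDeriv η (fun ξ => ‖ξ‖ ^ σ * Real.exp (-‖ξ‖))) := by
  have h0 : ExpHom (n := n) σ 0 (fun ξ => ‖ξ‖ ^ σ * Real.exp (-‖ξ‖)) :=
    ExpHom.base (j := 0) le_rfl (by simpa using HomSmooth.norm_rpow (n := n) σ)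
  have := h0.foldl η (List.finRange n)
  rwa [zero_add, ← Fin.sum_univ_def] at this

/-- The pointwise domination of the integrand by Gamma integrands. -/
lemma integrand_le {σ C t a : ℝ} {k : ℕ} (ht : 0 < t)
    (ha : |a| ≤ C * ((t ^ (σ - k) + t ^ σ) * Real.exp (-t))) :
    t ^ (2 * k) * |a| ^ 2 / t ≤ 2 * C ^ 2 *
      (Real.exp (-t) * t ^ (2 * σ - 1) + Real.exp (-t) * t ^ (2 * σ + 2 * k - 1)) := by
  have e1 : t ^ (2 * σ - 1) = t ^ (2 * k) * (t ^ (σ - k)) ^ 2 / t := by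
    rw [← Real.rpow_natCast, ← Real.rpow_natCast, ← Real.rpow_mul ht.le, ← Real.rpow_add ht,
      ← Real.rpow_sub_one ht.ne']
    congr 1; push_cast; ring
  have e2 : t ^ (2 * σ + 2 * k - 1) = t ^ (2 * k) * (t ^ σ) ^ 2 / t := by
    rw [← Real.rpow_natCast, ← Real.rpow_natCast, ← Real.rpow_mul ht.le, ← Real.rpow_add ht,
      ← Real.rpow_sub_one ht.ne']
    congr 1; push_cast; ring
  rw [e1, e2]
  generalize t ^ (σ - k) = u at *
  generalize t ^ σ = v at *
  have he : Real.exp (-t) ^ 2 ≤ Real.exp (-t) := by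
    have h1 : Real.exp (-t) ≤ 1 := Real.exp_le_one_iff.2 (by linarith)
    nlinarith [Real.exp_pos (-t)]
  have h2 : |a| ^ 2 ≤ 2 * C ^ 2 * (u ^ 2 + v ^ 2) * Real.exp (-t) := by
    calc |a| ^ 2 ≤ (C * ((u + v) * Real.exp (-t))) ^ 2 := by gcongr
      _ = C ^ 2 * (u + v) ^ 2 * Real.exp (-t) ^ 2 := by ring
      _ ≤ C ^ 2 * (2 * (u ^ 2 + v ^ 2)) * Real.exp (-t) := by
        gcongr
        nlinarith [sq_nonneg (u - v)]
      _ = _ := by ring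
  calc t ^ (2 * k) * |a| ^ 2 / t
      ≤ t ^ (2 * k) * (2 * C ^ 2 * (u ^ 2 + v ^ 2) * Real.exp (-t)) / t := by gcongr
    _ = _ := by ring

/-- For `ψ(ξ) = |ξ|^σ e^{-|ξ|}` on `ℝⁿ` and every multi-index `η ∈ ℕⁿ`,
`sup_{|x|=1} ∫_0^∞ t^{2|η|} |(∂^η ψ)(t x)|² dt/t < ∞`. -/
theorem sup_multiDeriv_psi_finite (n : ℕ) (hn : 1 ≤ n) (σ : ℝ) (hσ : 0 < σ)
    (η : Fin n → ℕ) :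
    (⨆ x ∈ {x : EuclideanSpace ℝ (Fin n) | ‖x‖ = 1},
      ∫⁻ t in Set.Ioi (0 : ℝ),
        ENNReal.ofReal (t ^ (2 * ∑ i, η i) *
          |multiDeriv η (fun ξ => ‖ξ‖ ^ σ * Real.exp (-‖ξ‖)) (t • x)| ^ 2 / t)) < ⊤ := by
  obtain ⟨C, hC0, hC⟩ := (expHom_multiDeriv σ η).bound
  set k := ∑ i, η i
  have hint : IntegrableOn (fun t : ℝ => 2 * C ^ 2 * (Real.exp (-t) * t ^ (2 * σ - 1) +
      Real.exp (-t) * t ^ (2 * σ + 2 * k - 1))) (Set.Ioi 0) :=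
    ((Real.GammaIntegral_convergent (by positivity)).add
      (Real.GammaIntegral_convergent (by positivity))).const_mul _
  refine lt_of_le_of_lt (iSup₂_le fun x hx => ?_) hint.lintegral_lt_top
  refine setLIntegral_mono' measurableSet_Ioi fun t ht => ?_
  have ht0 : (0 : ℝ) < t := ht
  have hnorm : ‖t • x‖ = t := by
    rw [norm_smul, Real.norm_of_nonneg ht0.le, show ‖x‖ = 1 from hx, mul_one]
  have hb := hC (t • x) (by rw [← norm_ne_zero_iff, hnorm]; exact ht0.ne')
  rw [hnorm] at hb
  exact ENNReal.ofReal_le_ofReal (integrand_le ht0 hb)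
end

section
/- Let σ > 0. For every t > 0, ∫_0^∞ ∂_t^σ[t e^{-t²/(4u)}] u^{-3/2} du = 0, where ∂_t^σ[t e^{-t²/(4u)}] denotes the σ-th fractional derivative in t of the function t ↦ t e^{-t²/(4u)}. -/
/-!
Write `g x = x e^{-x²/4}` and `m = ⌊σ⌋ + 1`. By scaling, `F_u(y) = y e^{-y²/(4u)} = √u g(y/√u)`, so
`F_u^{(m)}(y) = (1/√u)^{m-1} g^{(m)}(y/√u)`. For fixed `y > 0` the substitution `x = y/√u` gives
`∫₀^∞ F_u^{(m)}(y) u^{-3/2} du = 2 y^{-m} ∫₀^∞ x^{m-1} g^{(m)}(x) dx`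
(`integral_subst`), and the last integral is `(-1)^{m-1} (m-1)! · (-g(0)) = 0` after repeated
integration by parts (`integral_pow_mul_gaussDeriv`). It remains to exchange the `u`- and
`s`-integrals. The same substitution applied to `|g^{(m)}|` reduces absolute convergence to
`∫₀^∞ (t+s)^{-m} s^{m-σ-1} ds < ∞` (`integrableOn_kernel`), which holds at `0` because `m > σ` and
at `∞` because `σ > 0`.
-/

open Real MeasureTheory

/-! ### The derivatives of the profile `x e^{-x²/4}` -/

/-- The polynomial `P_k` for which the `k`-th derivative of `x e^{-x²/4}` is `P_k(x) e^{-x²/4}`. -/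
noncomputable def gaussPoly : ℕ → Polynomial ℝ
  | 0 => Polynomial.X
  | k + 1 => Polynomial.derivative (gaussPoly k) -
      Polynomial.C (1 / 2) * Polynomial.X * gaussPoly k

/-- The `k`-th derivative of `x e^{-x²/4}`. -/
noncomputable def gaussDeriv (k : ℕ) (x : ℝ) : ℝ := (gaussPoly k).eval x * exp (-(1 / 4) * x ^ 2)

lemma hasDerivAt_gaussDeriv (k : ℕ) (x : ℝ) :
    HasDerivAt (gaussDeriv k) (gaussDeriv (k + 1) x) x := by
  have h1 := (gaussPoly k).hasDerivAt x
  have h2 : HasDerivAt (fun x : ℝ => exp (-(1 / 4) * x ^ 2))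
      (exp (-(1 / 4) * x ^ 2) * (-(1 / 4) * (2 * x))) x := by
    have := ((hasDerivAt_pow 2 x).const_mul (-(1 / 4) : ℝ)).exp
    simpa using this
  refine (h1.mul h2).congr_deriv ?_
  simp only [gaussDeriv, gaussPoly, Polynomial.eval_sub, Polynomial.eval_mul, Polynomial.eval_C,
    Polynomial.eval_X]
  ring

lemma continuous_gaussDeriv (k : ℕ) : Continuous (gaussDeriv k) :=
  continuous_iff_continuousAt.2 fun x => (hasDerivAt_gaussDeriv k x).continuousAt

lemma integrable_polynomial_mul_gaussian (p : Polynomial ℝ) :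
    Integrable (fun x : ℝ => p.eval x * exp (-(1 / 4) * x ^ 2)) := by
  induction p using Polynomial.induction_on' with
  | add p q hp hq =>
    simp only [Polynomial.eval_add, add_mul]
    exact hp.add hq
  | monomial n a =>
    have h := (integrable_rpow_mul_exp_neg_mul_sq (b := 1 / 4) (by norm_num)
      (s := (n : ℝ)) (by linarith [n.cast_nonneg (α := ℝ)])).const_mul a
    simpa [rpow_natCast, mul_assoc] using h

lemma integrable_pow_mul_gaussDeriv (j k : ℕ) :
    Integrable (fun x : ℝ => x ^ j * gaussDeriv k x) := by
  have h := integrable_polynomial_mul_gaussian (Polynomial.X ^ j * gaussPoly k)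
  simpa [gaussDeriv, mul_assoc] using h

/-- Integration by parts lowers `n` without changing the form of the integral; the boundary terms
vanish, at `n = 0` because the profile vanishes at the origin. -/
lemma integral_pow_mul_gaussDeriv (n : ℕ) :
    ∫ x in Set.Ioi (0 : ℝ), x ^ n * gaussDeriv (n + 1) x = 0 := by
  have boundary : ∀ n : ℕ, ∀ f' : ℝ → ℝ,
      (∀ x, HasDerivAt (fun x => x ^ n * gaussDeriv n x) (f' x) x) → Integrable f' →
      ∫ x in Set.Ioi (0 : ℝ), f' x = 0 := by
    intro n f' hd hi
    have ht := tendsto_zero_of_hasDerivAt_of_integrableOn_Ioi (a := 0) (fun x _ => hd x)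
      hi.integrableOn (integrable_pow_mul_gaussDeriv n n).integrableOn
    rw [integral_Ioi_of_hasDerivAt_of_tendsto' (fun x _ => hd x) hi.integrableOn ht]
    cases n <;> simp [gaussDeriv, gaussPoly]
  induction n with
  | zero =>
    refine boundary 0 _ (fun x => ?_) (integrable_pow_mul_gaussDeriv 0 1)
    simpa using hasDerivAt_gaussDeriv 0 x
  | succ n ih =>
    have hi1 := (integrable_pow_mul_gaussDeriv n (n + 1)).const_mul ((n : ℝ) + 1)
    have hi2 := integrable_pow_mul_gaussDeriv (n + 1) (n + 2)
    have h := boundary (n + 1) (fun x => ((n : ℝ) + 1) * (x ^ n * gaussDeriv (n + 1) x) +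
      x ^ (n + 1) * gaussDeriv (n + 2) x) (fun x => by
        refine ((hasDerivAt_pow (n + 1) x).mul (hasDerivAt_gaussDeriv (n + 1) x)).congr_deriv ?_
        simp
        ring) (hi1.add hi2)
    rw [integral_add hi1.integrableOn hi2.integrableOn, integral_const_mul, ih] at h
    simpa using h

/-- The scaling relation: with `c = u^{-1/2}`, the function `y e^{-y²/(4u)}` is `c⁻¹ g(c y)`. -/
lemma iteratedDeriv_subordinator {u : ℝ} (hu : 0 < u) (k : ℕ) :
    iteratedDeriv k (fun y : ℝ => (y : ℂ) * Complex.exp (-((y : ℂ) ^ 2 / (4 * (u : ℂ))))) =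
      fun y : ℝ => (((u ^ (-(1 : ℝ) / 2))⁻¹ * (u ^ (-(1 : ℝ) / 2)) ^ k *
        gaussDeriv k (u ^ (-(1 : ℝ) / 2) * y) : ℝ) : ℂ) := by
  set c : ℝ := u ^ (-(1 : ℝ) / 2) with hc
  have hc0 : c ≠ 0 := (rpow_pos_of_pos hu _).ne'
  have hc2 : c ^ 2 = u⁻¹ := by
    rw [hc, ← rpow_natCast, ← rpow_mul hu.le, ← rpow_neg_one]
    norm_num
  induction k with
  | zero =>
    funext y
    have h : (gaussDeriv 0 (c * y)) = c * (y * exp (-(y ^ 2 / (4 * u)))) := by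
      simp only [gaussDeriv, gaussPoly, Polynomial.eval_X, mul_pow, hc2]
      rw [mul_assoc]
      congr 3
      field_simp
    rw [h, pow_zero, mul_one, inv_mul_cancel_left₀ hc0]
    simp
  | succ k ih =>
    rw [iteratedDeriv_succ, ih]
    funext y
    have h1 : HasDerivAt (fun y => gaussDeriv k (c * y)) (gaussDeriv (k + 1) (c * y) * c) y := by
      have := (hasDerivAt_gaussDeriv k (c * y)).comp y ((hasDerivAt_id y).const_mul c)
      simpa [Function.comp_def] using this
    rw [((h1.const_mul (c⁻¹ * c ^ k)).ofReal_comp).deriv]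
    congr 1
    ring

/-! ### The substitution `x = y / √u` -/

/-- Puts the integrand in the form required by the power substitution `x = u^{-1/2}`. -/
lemma subst_aux {φ : ℝ → ℝ} (n : ℕ) {y : ℝ} (hy : 0 < y) {u : ℝ} :
    u ^ (-(3 : ℝ) / 2) * ((u ^ (-(1 : ℝ) / 2)) ^ n * φ (u ^ (-(1 : ℝ) / 2) * y)) =
      (2 * (y⁻¹) ^ n) * ((|(-(1 : ℝ) / 2)| * u ^ ((-(1 : ℝ) / 2) - 1)) •
        ((y * u ^ (-(1 : ℝ) / 2)) ^ n * φ (y * u ^ (-(1 : ℝ) / 2)))) := by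
  have h1 : |(-(1 : ℝ) / 2)| = 1 / 2 := by rw [abs_of_neg] <;> norm_num
  have h2 : (-(1 : ℝ) / 2) - 1 = -(3 : ℝ) / 2 := by norm_num
  have h3 : (y⁻¹) ^ n * y ^ n = 1 := by rw [← mul_pow, inv_mul_cancel₀ hy.ne', one_pow]
  rw [h1, h2, mul_comm y, smul_eq_mul]
  simp only [mul_pow]
  linear_combination (-u ^ (-(3 : ℝ) / 2) * ((u ^ (-(1 : ℝ) / 2)) ^ n *
    φ (u ^ (-(1 : ℝ) / 2) * y))) * h3

lemma integral_subst (φ : ℝ → ℝ) (n : ℕ) {y : ℝ} (hy : 0 < y) :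
    ∫ u in Set.Ioi (0 : ℝ),
      u ^ (-(3 : ℝ) / 2) * ((u ^ (-(1 : ℝ) / 2)) ^ n * φ (u ^ (-(1 : ℝ) / 2) * y)) =
      2 * (y⁻¹) ^ (n + 1) * ∫ x in Set.Ioi (0 : ℝ), x ^ n * φ x := by
  have h := integral_comp_rpow_Ioi (fun x => (y * x) ^ n * φ (y * x)) (p := -(1 : ℝ) / 2)
    (by norm_num)
  beta_reduce at h
  simp_rw [subst_aux n hy]
  rw [integral_const_mul, h,
    integral_comp_mul_left_Ioi (fun z => z ^ n * φ z) 0 hy, mul_zero, smul_eq_mul]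
  ring

lemma integrableOn_subst (φ : ℝ → ℝ) (n : ℕ) {y : ℝ} (hy : 0 < y)
    (h : IntegrableOn (fun x => x ^ n * φ x) (Set.Ioi 0)) :
    IntegrableOn (fun u : ℝ =>
      u ^ (-(3 : ℝ) / 2) * ((u ^ (-(1 : ℝ) / 2)) ^ n * φ (u ^ (-(1 : ℝ) / 2) * y)))
      (Set.Ioi 0) := by
  simp_rw [subst_aux n hy]
  refine Integrable.const_mul ?_ _
  refine (integrableOn_Ioi_comp_rpow_iff (fun x => (y * x) ^ n * φ (y * x))
    (p := -(1 : ℝ) / 2) (by norm_num)).2 ?_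
  refine (integrableOn_Ioi_comp_mul_left_iff (fun z => z ^ n * φ z) 0 hy).2 ?_
  simpa using h

/-! ### Absolute convergence and the exchange of integrals -/

lemma integrableOn_kernel {σ t : ℝ} (hσ : 0 < σ) (ht : 0 < t) (m : ℕ) (hm : σ < m) :
    IntegrableOn (fun s : ℝ => s ^ ((m : ℝ) - σ - 1) * ((t + s)⁻¹) ^ m) (Set.Ioi 0) := by
  have hmeas : ∀ A : Set ℝ, AEStronglyMeasurable
      (fun s : ℝ => s ^ ((m : ℝ) - σ - 1) * ((t + s)⁻¹) ^ m) (volume.restrict A) := by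
    intro A
    exact Measurable.aestronglyMeasurable (by fun_prop)
  rw [← Set.Ioc_union_Ioi_eq_Ioi (zero_le_one (α := ℝ)), integrableOn_union]
  constructor
  · have h := ((intervalIntegral.intervalIntegrable_rpow' (a := 0) (b := 1)
      (r := (m : ℝ) - σ - 1) (by linarith)).1).mul_const ((t⁻¹) ^ m)
    refine Integrable.mono' h (hmeas _) ?_
    filter_upwards [ae_restrict_mem measurableSet_Ioc] with s hs
    have hs0 : 0 < s := hs.1
    rw [norm_of_nonneg (by positivity)]
    gcongr
    linarith
  · have h := integrableOn_Ioi_rpow_of_lt (a := -σ - 1) (c := 1) (by linarith) one_pos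
    refine Integrable.mono' h (hmeas _) ?_
    filter_upwards [ae_restrict_mem measurableSet_Ioi] with s hs
    have hs0 : 0 < s := one_pos.trans hs
    rw [norm_of_nonneg (by positivity)]
    have h1 : s ^ (-σ - 1) = s ^ ((m : ℝ) - σ - 1) * (s⁻¹) ^ m := by
      rw [inv_pow, ← rpow_natCast, ← rpow_neg hs0.le, ← rpow_add hs0]
      congr 1
      ring
    rw [h1]
    gcongr
    linarith

lemma integral_integral_eq_zero {σ t : ℝ} (hσ : 0 < σ) (ht : 0 < t) (n : ℕ)
    (hn : σ < ((n + 1 : ℕ) : ℝ)) :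
    ∫ u in Set.Ioi (0 : ℝ), ∫ s in Set.Ioi (0 : ℝ), s ^ (((n + 1 : ℕ) : ℝ) - σ - 1) *
      (u ^ (-(3 : ℝ) / 2) * ((u ^ (-(1 : ℝ) / 2)) ^ n *
        gaussDeriv (n + 1) (u ^ (-(1 : ℝ) / 2) * (t + s)))) = 0 := by
  have hI := (integrable_pow_mul_gaussDeriv n (n + 1)).integrableOn (s := Set.Ioi (0 : ℝ))
  rw [integral_integral_swap]
  · rw [setIntegral_congr_fun (g := fun _ => (0 : ℝ)) measurableSet_Ioi, integral_zero]
    intro s hs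
    have hs0 : 0 < s := hs
    simp only
    rw [integral_const_mul, integral_subst _ n (by linarith), integral_pow_mul_gaussDeriv]
    simp
  · have hmeas : Measurable (gaussDeriv (n + 1)) := (continuous_gaussDeriv _).measurable
    refine (integrable_prod_iff' ?_).2 ⟨?_, ?_⟩
    · refine Measurable.aestronglyMeasurable ?_
      simp only [Function.uncurry_def]
      fun_prop
    · filter_upwards [ae_restrict_mem measurableSet_Ioi] with s hs
      have hs0 : 0 < s := hs
      simp only [Function.uncurry_apply_pair]
      exact (integrableOn_subst _ n (add_pos ht hs0) hI).const_mul _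
    · refine ((integrableOn_kernel hσ ht (n + 1) hn).const_mul
        (2 * ∫ x in Set.Ioi (0 : ℝ), x ^ n * |gaussDeriv (n + 1) x|)).congr ?_
      filter_upwards [ae_restrict_mem measurableSet_Ioi] with s hs
      have hs0 : 0 < s := hs
      have hnorm : ∀ u ∈ Set.Ioi (0 : ℝ),
          ‖s ^ (((n + 1 : ℕ) : ℝ) - σ - 1) * (u ^ (-(3 : ℝ) / 2) * ((u ^ (-(1 : ℝ) / 2)) ^ n *
            gaussDeriv (n + 1) (u ^ (-(1 : ℝ) / 2) * (t + s))))‖ =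
          s ^ (((n + 1 : ℕ) : ℝ) - σ - 1) * (u ^ (-(3 : ℝ) / 2) * ((u ^ (-(1 : ℝ) / 2)) ^ n *
            |gaussDeriv (n + 1) (u ^ (-(1 : ℝ) / 2) * (t + s))|)) := by
        intro u hu
        have hu0 : 0 < u := hu
        rw [norm_mul, norm_mul, norm_mul, norm_of_nonneg (by positivity),
          norm_of_nonneg (by positivity), norm_of_nonneg (by positivity), norm_eq_abs]
      simp only [Function.uncurry_apply_pair]
      rw [setIntegral_congr_fun measurableSet_Ioi hnorm, integral_const_mul,
        integral_subst (fun x => |gaussDeriv (n + 1) x|) n (by linarith)]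
      ring

/-- For `σ > 0` and every `t > 0`, `∫_0^∞ ∂_t^σ[t e^{-t²/(4u)}] u^{-3/2} du = 0`. -/
theorem integral_fracDeriv_subordinator_eq_zero (σ : ℝ) (hσ : 0 < σ) (t : ℝ) (ht : 0 < t) :
    ∫ u in Set.Ioi (0 : ℝ),
        fracDeriv σ (fun t => (t : ℂ) * Complex.exp (-((t : ℂ) ^ 2 / (4 * (u : ℂ))))) t *
          ((u ^ (-(3 : ℝ) / 2) : ℝ) : ℂ) = 0 := by
  have hn : σ < ((⌊σ⌋₊ + 1 : ℕ) : ℝ) := by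
    push_cast
    exact Nat.lt_floor_add_one σ
  have key := integral_integral_eq_zero hσ ht ⌊σ⌋₊ hn
  unfold fracDeriv mIdx
  generalize Complex.exp (-(Complex.I * (Real.pi : ℂ) * ((((⌊σ⌋₊ + 1 : ℕ) : ℝ) - σ : ℝ) : ℂ))) /
    Complex.Gamma ((((⌊σ⌋₊ + 1 : ℕ) : ℝ) - σ : ℝ) : ℂ) = K
  generalize ⌊σ⌋₊ = n at *
  rw [setIntegral_congr_fun (g := fun u : ℝ => K * ((∫ s in Set.Ioi (0 : ℝ),
    s ^ (((n + 1 : ℕ) : ℝ) - σ - 1) * (u ^ (-(3 : ℝ) / 2) * ((u ^ (-(1 : ℝ) / 2)) ^ n *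
        gaussDeriv (n + 1) (u ^ (-(1 : ℝ) / 2) * (t + s)))) : ℝ) : ℂ)) measurableSet_Ioi,
    integral_const_mul, integral_complex_ofReal, key, Complex.ofReal_zero, mul_zero]
  intro u hu
  have hu0 : 0 < u := hu
  have hc0 : u ^ (-(1 : ℝ) / 2) ≠ 0 := (rpow_pos_of_pos hu0 _).ne'
  simp only
  rw [mul_assoc, ← integral_mul_const, ← integral_complex_ofReal]
  congr 1
  refine integral_congr_ae (Filter.Eventually.of_forall fun s => ?_)
  simp only [iteratedDeriv_subordinator hu0]
  rw [← Complex.ofReal_mul, ← Complex.ofReal_mul]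
  congr 1
  rw [pow_succ]
  field_simp
end
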